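/- Let G be a finite group, H ≤ G a subgroup of index n, l = 3, G̃ = C₃^n ⋊ G, H̃ = C₃^n ⋊ H, and χ: H̃ → C₃ the projection character (ζ₁,…,ζₙ, h) ↦ ζ₁, with kernel U = ker(χ). Let H̃' ≤ G̃ be a subgroup and χ': H̃' → ℂ^× a character whose image is cyclic of order 3, with kernel U' = ker(χ'). If Ind_{H̃}^{G̃}(1) ≅ Ind_{H̃'}^{G̃}(1) and Ind_{U}^{G̃}(1) ≅ Ind_{U'}^{G̃}(1), then either Ind_{H̃}^{G̃}(χ) ≅ Ind_{H̃'}^{G̃}(χ') or Ind_{H̃}^{G̃}(χ) ≅ Ind_{H̃'}^{G̃}(χ̄'), where χ̄' is the complex conjugate character of χ'. -/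

import Mathlib

noncomputable section

/-- The carrier of the representation of `G` induced from a one-dimensional character
`χ : H → ℂˣ` of a subgroup `H ≤ G`: the space of functions `f : G → ℂ` with
`f (h * g) = χ h * f g`. -/
def IndCarrier {G : Type} [Group G] (H : Subgroup G) (χ : H →* ℂˣ) : Submodule ℂ (G → ℂ) where
  carrier := {f | ∀ (h : H) (g : G), f (↑h * g) = (χ h : ℂ) * f g}
  add_mem' := fun ha hb h g => by
    simp only [Set.mem_setOf_eq] at *
    simp [ha h g, hb h g, mul_add]
  zero_mem' := fun h g => by simp
  smul_mem' := fun c a ha h g => by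
    simp only [Set.mem_setOf_eq] at *
    simp [ha h g]
    ring

/-- The representation of `G` induced from the one-dimensional character `χ` of `H ≤ G`,
realized on `IndCarrier H χ` by right translation. -/
def ind {G : Type} [Group G] (H : Subgroup G) (χ : H →* ℂˣ) :
    Representation ℂ G (IndCarrier H χ) where
  toFun g :=
    { toFun := fun f => ⟨fun x => f.1 (x * g), fun h x => by
        simpa [mul_assoc] using f.2 h (x * g)⟩
      map_add' := fun f₁ f₂ => rfl
      map_smul' := fun c f => rfl }
  map_one' := by
    ext f x
    simp
  map_mul' g₁ g₂ := by
    ext f x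
    simp [mul_assoc]

/-- Two representations are equivalent if there is a `ℂ`-linear equivalence intertwining the
two actions. -/
def RepEquiv {G V W : Type} [Group G] [AddCommGroup V] [Module ℂ V] [AddCommGroup W]
    [Module ℂ W] (ρ : Representation ℂ G V) (τ : Representation ℂ G W) : Prop :=
  ∃ e : V ≃ₗ[ℂ] W, ∀ (g : G) (v : V), e (ρ g v) = τ g (e v)

/-- The direct sum of two representations. -/
def prodRep {G V W : Type} [Group G] [AddCommGroup V] [Module ℂ V] [AddCommGroup W]
    [Module ℂ W] (ρ : Representation ℂ G V) (τ : Representation ℂ G W) :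
    Representation ℂ G (V × W) where
  toFun g := (ρ g).prodMap (τ g)
  map_one' := by ext <;> simp
  map_mul' g₁ g₂ := by ext <;> simp

/-- A representation is irreducible if the space is nonzero and the only invariant submodules
are `⊥` and `⊤`. -/
def IsIrreducibleRep {G V : Type} [Group G] [AddCommGroup V] [Module ℂ V]
    (ρ : Representation ℂ G V) : Prop :=
  Nontrivial V ∧ ∀ p : Submodule ℂ V, (∀ g : G, ∀ v ∈ p, ρ g v ∈ p) → p = ⊥ ∨ p = ⊤

/-- The complex conjugate of a one-dimensional character. -/
def conjChar {H : Type} [Group H] (χ : H →* ℂˣ) : H →* ℂˣ :=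
  (Units.map (starRingEnd ℂ).toMonoidHom).comp χ
/-- `C_l`: the group of `l`-th roots of unity in `ℂˣ`. -/
abbrev rootsC (l : ℕ) : Subgroup ℂˣ := rootsOfUnity l ℂ

variable (G : Type) [Group G] (H : Subgroup G) (l : ℕ)

/-- The automorphism of `C_l^{G/H}` permuting the coordinates according to the left
translation action of `g` on the cosets `G/H`. -/
def permAut (g : G) : ((G ⧸ H) → rootsC l) ≃* ((G ⧸ H) → rootsC l) where
  toFun f x := f (g⁻¹ • x)
  invFun f x := f (g • x)
  left_inv f := funext fun x => by simp
  right_inv f := funext fun x => by simp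
  map_mul' f₁ f₂ := rfl

/-- The action of `G` on `C_l^{G/H}` by permuting the coordinates as `G` permutes the left
cosets `G/H`. -/
def permHom : G →* MulAut ((G ⧸ H) → rootsC l) where
  toFun := permAut G H l
  map_one' := MulEquiv.ext fun f => funext fun x => by
    show f ((1 : G)⁻¹ • x) = f x
    rw [inv_one, one_smul]
  map_mul' g₁ g₂ := MulEquiv.ext fun f => funext fun x => by
    show f ((g₁ * g₂)⁻¹ • x) = f (g₂⁻¹ • g₁⁻¹ • x)
    rw [mul_inv_rev, mul_smul]

/-- `G̃ = C_l^{G/H} ⋊ G`. -/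
abbrev Gtil := ((G ⧸ H) → rootsC l) ⋊[permHom G H l] G

/-- `H̃ = C_l^{G/H} ⋊ H`, as a subgroup of `G̃`: the elements whose `G`-component lies
in `H`. -/
def Htil : Subgroup (Gtil G H l) := Subgroup.comap SemidirectProduct.rightHom H

/-- The character `χ : H̃ → C_l ⊆ ℂˣ` given by projection onto the coordinate indexed by the
trivial coset `H ∈ G/H`. -/
def chiTil : Htil G H l →* ℂˣ where
  toFun x := ((x.1.left ((1 : G) : G ⧸ H) : ℂˣ))
  map_one' := by simp
  map_mul' x y := by
    have hxy : (x * y).1.left = x.1.left * permHom G H l x.1.right y.1.left :=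
      SemidirectProduct.mul_left x.1 y.1
    have hmem : x.1.right ∈ H := x.2
    have hco : (x.1.right)⁻¹ • ((1 : G) : G ⧸ H) = ((1 : G) : G ⧸ H) := by
      show ((x.1.right⁻¹ * 1 : G) : G ⧸ H) = ((1 : G) : G ⧸ H)
      rw [mul_one]
      exact (QuotientGroup.eq).2 (by simpa using hmem)
    calc ((x * y).1.left ((1 : G) : G ⧸ H) : ℂˣ)
        = ((x.1.left ((1 : G) : G ⧸ H) * y.1.left ((x.1.right)⁻¹ • ((1 : G) : G ⧸ H)) : rootsC l) : ℂˣ) := by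
          rw [hxy]; rfl
      _ = (x.1.left ((1 : G) : G ⧸ H) : ℂˣ) * (y.1.left ((1 : G) : G ⧸ H) : ℂˣ) := by
          rw [hco]; push_cast; rfl

/-! The base group `A = C_l^{G/H}` acts on `Ind χ` through a different coordinate on each coset, so
any nonzero vector yields, by subtracting its translate under some `a ∈ A`, a vector supported on a
single coset; hence `Ind χ` is irreducible. On the other side, Fourier analysis on
`H̃' / ker χ' ≅ im χ'` embeds `Ind_{ker χ'} 1 ≅ Ind_{ker χ} 1 ⊇ Ind χ` into the sum of the
`Ind χ'^i`, `i < |im χ'|`, so by Schur's lemma `Ind χ` embeds into one of them, and the embedding is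
an isomorphism by dimension. The exponent `i = 0` is impossible: `A` acts trivially on
`Ind_{H̃'} 1 ≅ Ind_{H̃} 1` but not on `Ind χ`. -/

open Representation (IntertwiningMap IsIrreducible)

section RepEquiv

variable {E V W : Type} [Group E] [AddCommGroup V] [Module ℂ V] [AddCommGroup W] [Module ℂ W]
  {ρ : Representation ℂ E V} {τ : Representation ℂ E W}

theorem repEquiv_iff_nonempty_equiv : RepEquiv ρ τ ↔ Nonempty (ρ.Equiv τ) :=
  ⟨fun ⟨e, he⟩ => ⟨.mk e fun g => LinearMap.ext (he g)⟩,
    fun ⟨e⟩ => ⟨e.toLinearEquiv, e.toIntertwiningMap.isIntertwining⟩⟩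

theorem repEquiv_of_injective_of_linearEquiv [FiniteDimensional ℂ V] (T : IntertwiningMap ρ τ)
    (hT : Function.Injective T) (e : V ≃ₗ[ℂ] W) : RepEquiv ρ τ :=
  have : FiniteDimensional ℂ W := .equiv e
  ⟨.ofInjectiveOfFinrankEq T.toLinearMap hT e.finrank_eq, T.isIntertwining⟩

theorem intertwiningMap_ne_zero_of_injective [Nontrivial V] {T : IntertwiningMap ρ τ}
    (hT : Function.Injective T) : T ≠ 0 :=
  have ⟨v, hv⟩ := exists_ne (0 : V)
  DFunLike.ne_iff.2 ⟨v, (map_ne_zero_iff T hT).2 hv⟩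

end RepEquiv

section Induced

variable {E : Type} [Group E] {K : Subgroup E}

theorem ind_apply (ψ : K →* ℂˣ) (g : E) (f : IndCarrier K ψ) (x : E) :
    (ind K ψ g f).1 x = f.1 (x * g) :=
  rfl

theorem mul_out_mk_inv_mem (K : Subgroup E) (x : E) :
    x * (QuotientGroup.mk x⁻¹ : E ⧸ K).out ∈ K := by
  simpa using QuotientGroup.eq.1 (QuotientGroup.out_eq' (QuotientGroup.mk x⁻¹ : E ⧸ K)).symm

/-- Evaluation on the representatives `q.out⁻¹` of the right cosets `K \ E`, which identifies the
underlying space of an induced representation with the functions on `E ⧸ K`. -/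
def IndCarrier.equivFun (K : Subgroup E) (ψ : K →* ℂˣ) : IndCarrier K ψ ≃ₗ[ℂ] (E ⧸ K → ℂ) where
  toFun f q := f.1 q.out⁻¹
  map_add' _ _ := rfl
  map_smul' _ _ := rfl
  invFun φ := ⟨fun x => ψ ⟨_, mul_out_mk_inv_mem K x⟩ * φ (QuotientGroup.mk x⁻¹), fun k x => by
    have hq : (QuotientGroup.mk (k * x)⁻¹ : E ⧸ K) = QuotientGroup.mk x⁻¹ := by
      rw [mul_inv_rev]
      exact QuotientGroup.mk_mul_of_mem _ (inv_mem k.2)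
    simp only [hq, mul_assoc (k : E), ← mul_assoc (ψ k : ℂ), ← Units.val_mul, ← map_mul]
    rfl⟩
  left_inv f := by
    ext x
    change ψ ⟨_, mul_out_mk_inv_mem K x⟩ * f.1 _ = _
    rw [← f.2, mul_inv_cancel_right]
  right_inv φ := by
    ext q
    have hψ (h : (1 : E) ∈ K) : ψ ⟨1, h⟩ = 1 := map_one ψ
    simp [hψ]

/-- The underlying spaces of the representations induced from two characters of `K` are linearly
isomorphic. -/
def indLinearEquiv (ψ θ : K →* ℂˣ) : IndCarrier K ψ ≃ₗ[ℂ] IndCarrier K θ :=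
  IndCarrier.equivFun K ψ ≪≫ₗ (IndCarrier.equivFun K θ).symm

instance [K.FiniteIndex] (ψ : K →* ℂˣ) : FiniteDimensional ℂ (IndCarrier K ψ) :=
  .equiv (IndCarrier.equivFun K ψ).symm

instance (ψ : K →* ℂˣ) : Nontrivial (IndCarrier K ψ) :=
  (IndCarrier.equivFun K ψ).toEquiv.nontrivial

theorem ind_one_apply_of_mem_normalCore {g : E} (hg : g ∈ K.normalCore) (f : IndCarrier K 1) :
    ind K 1 g f = f := by
  ext x
  simpa [ind_apply] using f.2 ⟨x * g * x⁻¹, hg x⟩ x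

theorem sum_smul_ind_eq_smul [Fintype (E ⧸ K)] {ψ : K →* ℂˣ} {d : IndCarrier K ψ} {x₀ : E}
    (hd : ∀ x, x * x₀⁻¹ ∉ K → d.1 x = 0) (f : IndCarrier K ψ) :
    ∑ q : E ⧸ K, f.1 q.out⁻¹ • ind K ψ (q.out * x₀) d = d.1 x₀ • f := by
  ext x
  have hout (q : E ⧸ K) (hq : q ≠ QuotientGroup.mk x⁻¹) : d.1 (x * (q.out * x₀)) = 0 := by
    refine hd _ fun hmem => hq ?_
    rw [← QuotientGroup.out_eq' q]
    exact (QuotientGroup.eq.2 (by simpa [mul_assoc] using hmem)).symm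
  have hx := mul_out_mk_inv_mem K x
  set y := (QuotientGroup.mk x⁻¹ : E ⧸ K).out
  calc (∑ q : E ⧸ K, f.1 q.out⁻¹ • ind K ψ (q.out * x₀) d).1 x
      = ∑ q : E ⧸ K, f.1 q.out⁻¹ * d.1 (x * (q.out * x₀)) := by
        simp [ind_apply, mul_assoc]
    _ = f.1 y⁻¹ * d.1 (x * y * x₀) := by
        rw [Fintype.sum_eq_single _ fun q hq => by rw [hout q hq, mul_zero], mul_assoc]
    _ = d.1 x₀ * f.1 (x * y * y⁻¹) := by
        rw [d.2 ⟨_, hx⟩, f.2 ⟨_, hx⟩]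
        ring
    _ = d.1 x₀ * f.1 x := by rw [mul_inv_cancel_right]

theorem eq_top_of_mem_supported_on_coset [K.FiniteIndex] {ψ : K →* ℂˣ}
    {p : Subrepresentation (ind K ψ)} {d : IndCarrier K ψ} (hdp : d ∈ p) {x₀ : E}
    (hd₀ : d.1 x₀ ≠ 0) (hd : ∀ x, x * x₀⁻¹ ∉ K → d.1 x = 0) : p = ⊤ := by
  have := Fintype.ofFinite (E ⧸ K)
  refine top_le_iff.1 fun f _ => ?_
  have hmem : d.1 x₀ • f ∈ p.toSubmodule := by
    rw [← sum_smul_ind_eq_smul hd]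
    exact sum_mem fun q _ => p.toSubmodule.smul_mem _ (p.apply_mem_toSubmodule _ hdp)
  exact (p.toSubmodule.smul_mem_iff hd₀).1 hmem

end Induced

section RootsOfUnity

variable {k : Type*} [Field k] {S : Subgroup kˣ}

theorem coe_pow_natCard_eq_one (z : S) : ((z : kˣ) : k) ^ Nat.card S = 1 := by
  rw [← Units.val_pow_eq_pow_val, ← S.coe_pow, pow_card_eq_one', S.coe_one, Units.val_one]

theorem sum_inv_pow_eq_zero {z : S} (hz : z ≠ 1) :
    ∑ i ∈ Finset.range (Nat.card S), ((z : kˣ) : k)⁻¹ ^ i = 0 := by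
  have hz' : ((z : kˣ) : k)⁻¹ ≠ 1 := by simpa using hz
  rw [geom_sum_eq hz', inv_pow, coe_pow_natCard_eq_one, inv_one, sub_self, zero_div]

theorem conjChar_eq_pow {M : Type} [Group M] (ψ : M →* ℂˣ) [Finite ψ.range] :
    conjChar ψ = ψ ^ (Nat.card ψ.range - 1) := by
  ext m
  have hpow : (ψ m : ℂ) ^ Nat.card ψ.range = 1 := coe_pow_natCard_eq_one (ψ.rangeRestrict m)
  have hnorm : ‖(ψ m : ℂ)‖ = 1 := Complex.norm_eq_one_of_pow_eq_one hpow Nat.card_pos.ne'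
  calc starRingEnd ℂ (ψ m : ℂ) = (ψ m : ℂ)⁻¹ := (Complex.inv_eq_conj hnorm).symm
    _ = (ψ m : ℂ) ^ (Nat.card ψ.range - 1) :=
      inv_eq_of_mul_eq_one_right (by rw [mul_pow_sub_one Nat.card_pos.ne', hpow])
    _ = ((ψ ^ (Nat.card ψ.range - 1)) m : ℂˣ) := by simp

theorem nontrivial_rootsC {l : ℕ} (hl : 1 < l) : Nontrivial (rootsC l) := by
  have : NeZero l := ⟨by lia⟩
  rwa [← Finite.one_lt_card_iff_nontrivial, Complex.card_rootsOfUnity]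

end RootsOfUnity

section KernelInduction

theorem map_surjInv_rangeRestrict {M N : Type*} [Group M] [Group N] (φ : M →* N) (z : φ.range) :
    φ (Function.surjInv φ.rangeRestrict_surjective z) = z :=
  congrArg Subtype.val (Function.surjInv_eq φ.rangeRestrict_surjective z)

variable {E : Type} [Group E] {K : Subgroup E} (ψ : K →* ℂˣ)

theorem apply_mul_eq_of_map_eq {ψ : K →* ℂˣ} (f : IndCarrier (ψ.ker.map K.subtype) 1) {k k' : K}
    (h : ψ k = ψ k') (x : E) : f.1 (k * x) = f.1 (k' * x) := by
  have hker : k * k'⁻¹ ∈ ψ.ker := by simp [MonoidHom.mem_ker, h]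
  simpa using f.2 ⟨_, Subgroup.mem_map_of_mem K.subtype hker⟩ (k' * x)

/-- The inclusion of `Ind_K ψ` into `Ind_{ker ψ} 1`. -/
def indToIndKer : IntertwiningMap (ind K ψ) (ind (ψ.ker.map K.subtype) 1) where
  toFun f := ⟨f.1, by
    rintro ⟨_, k, hk, rfl⟩ x
    have hψ : ψ k = 1 := hk
    simpa [hψ] using f.2 k x⟩
  map_add' _ _ := rfl
  map_smul' _ _ := rfl
  isIntertwining' _ := rfl

theorem indToIndKer_injective : Function.Injective (indToIndKer ψ) := fun _ _ h =>
  Subtype.ext (congrArg (fun f => f.1) h)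

/-- The group `K / ker ψ ≅ ψ.range` acts on `Ind_{ker ψ} 1` by left translation; this is the `i`-th
coefficient of the Fourier expansion for that action, up to the factor `|ψ.range|`. The function
`Function.surjInv` lifts an element of `ψ.range` to `K`. -/
def kerFourierCoeff [Fintype ψ.range] (i : ℕ) :
    IntertwiningMap (ind (ψ.ker.map K.subtype) 1) (ind K (ψ ^ i)) where
  toFun f := ⟨fun x => ∑ z : ψ.range, ((z : ℂˣ) : ℂ)⁻¹ ^ i *
      f.1 (Function.surjInv ψ.rangeRestrict_surjective z * x), by
    intro k x
    have hlift (z : ψ.range) :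
        f.1 (Function.surjInv ψ.rangeRestrict_surjective (z * ψ.rangeRestrict k) * x) =
          f.1 (Function.surjInv ψ.rangeRestrict_surjective z * (k * x)) := by
      rw [← mul_assoc, ← Subgroup.coe_mul]
      exact apply_mul_eq_of_map_eq f (by simp [map_surjInv_rangeRestrict]) x
    rw [Finset.mul_sum]
    refine Fintype.sum_equiv (Equiv.mulRight (ψ.rangeRestrict k)) _ _ fun z => ?_
    simp [hlift, mul_pow, mul_assoc]⟩
  map_add' _ _ := by ext; simp [mul_add, Finset.sum_add_distrib]
  map_smul' _ _ := by ext; simp [Finset.mul_sum, mul_left_comm]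
  isIntertwining' g := by ext; simp [ind_apply, mul_assoc]

variable {ψ}

theorem sum_kerFourierCoeff [Fintype ψ.range] (f : IndCarrier (ψ.ker.map K.subtype) 1) :
    ∑ i ∈ Finset.range (Nat.card ψ.range), (kerFourierCoeff ψ i f).1 =
      (Nat.card ψ.range : ℂ) • f.1 := by
  ext x
  let lift : ψ.range → K := Function.surjInv ψ.rangeRestrict_surjective
  have hone : f.1 (lift 1 * x) = f.1 x := by
    simpa using apply_mul_eq_of_map_eq f (k := lift 1) (k' := 1)
      (by simp [lift, map_surjInv_rangeRestrict]) x
  calc (∑ i ∈ Finset.range (Nat.card ψ.range), (kerFourierCoeff ψ i f).1) x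
      = ∑ z : ψ.range, (∑ i ∈ Finset.range (Nat.card ψ.range), ((z : ℂˣ) : ℂ)⁻¹ ^ i) *
          f.1 (lift z * x) := by
        simp only [Finset.sum_mul, Finset.sum_apply]
        exact Finset.sum_comm
    _ = Nat.card ψ.range * f.1 x := by
        rw [Fintype.sum_eq_single 1 fun z hz => by rw [sum_inv_pow_eq_zero hz, zero_mul], hone]
        simp

theorem exists_injective_to_ind_pow [Finite ψ.range] {V : Type} [AddCommGroup V] [Module ℂ V]
    {ρ : Representation ℂ E V} [IsIrreducible ρ]
    (T : IntertwiningMap ρ (ind (ψ.ker.map K.subtype) 1)) (hT : T ≠ 0) :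
    ∃ i < Nat.card ψ.range, ∃ S : IntertwiningMap ρ (ind K (ψ ^ i)), Function.Injective S := by
  have := Fintype.ofFinite ψ.range
  by_contra! hinj
  have hzero (i) (hi : i < Nat.card ψ.range) (v : V) : kerFourierCoeff ψ i (T v) = 0 :=
    DFunLike.congr_fun
      ((IsIrreducible.injective_or_eq_zero ((kerFourierCoeff ψ i).comp T)).resolve_left
        (hinj i hi _)) v
  refine hT (DFunLike.ext _ _ fun v => Subtype.ext ?_)
  have hsum := sum_kerFourierCoeff (T v)
  rw [Finset.sum_eq_zero fun i hi => by rw [hzero i (Finset.mem_range.1 hi)]; rfl] at hsum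
  exact (smul_eq_zero.1 hsum.symm).resolve_left (Nat.cast_ne_zero.2 Nat.card_pos.ne')

end KernelInduction

section Wreath

variable {G H l}

instance [H.FiniteIndex] : (Htil G H l).FiniteIndex :=
  ⟨by
    rw [Htil, Subgroup.index_comap_of_surjective _ SemidirectProduct.rightHom_surjective]
    exact Subgroup.FiniteIndex.index_ne_zero⟩

theorem inl_mem_normalCore_Htil (a : (G ⧸ H) → rootsC l) :
    (SemidirectProduct.inl a : Gtil G H l) ∈ (Htil G H l).normalCore := fun x => by
  simp [Htil]

theorem mul_inv_mem_Htil_iff {x y : Gtil G H l} :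
    x * y⁻¹ ∈ Htil G H l ↔ ((x.right⁻¹ : G) : G ⧸ H) = (y.right⁻¹ : G) := by
  simp [Htil, QuotientGroup.eq]

theorem chiTil_conj_inl (x : Gtil G H l) (a : (G ⧸ H) → rootsC l) :
    chiTil G H l ⟨x * SemidirectProduct.inl a * x⁻¹, inl_mem_normalCore_Htil a x⟩ =
      a (x.right⁻¹ : G) := by
  have hleft : (x * SemidirectProduct.inl a * x⁻¹).left = permHom G H l x.right a := by
    simp [mul_comm]
  change ((x * SemidirectProduct.inl a * x⁻¹).left ((1 : G) : G ⧸ H) : ℂˣ) = _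
  rw [hleft]
  exact congrArg (fun q => (a q : ℂˣ)) (congrArg QuotientGroup.mk (mul_one x.right⁻¹))

theorem ind_chiTil_inl_apply (a : (G ⧸ H) → rootsC l) (f : IndCarrier (Htil G H l) (chiTil G H l))
    (x : Gtil G H l) :
    (ind _ (chiTil G H l) (SemidirectProduct.inl a) f).1 x =
      ((a (x.right⁻¹ : G) : ℂˣ) : ℂ) * f.1 x := by
  rw [← chiTil_conj_inl, ← f.2, inv_mul_cancel_right, ind_apply]

variable [Nontrivial (rootsC l)]

theorem exists_ind_chiTil_inl_sub_supported_on_coset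
    {f : IndCarrier (Htil G H l) (chiTil G H l)} (hf : f ≠ 0) :
    ∃ (a : (G ⧸ H) → rootsC l) (x₀ : Gtil G H l),
      (ind _ (chiTil G H l) (SemidirectProduct.inl a) f - f).1 x₀ ≠ 0 ∧
      ∀ x, x * x₀⁻¹ ∉ Htil G H l →
        (ind _ (chiTil G H l) (SemidirectProduct.inl a) f - f).1 x = 0 := by
  classical
  obtain ⟨w, hw⟩ := exists_ne (1 : rootsC l)
  have hw' : ((w : ℂˣ) : ℂ) ≠ 1 := by simpa using hw
  obtain ⟨x₀, hx₀⟩ : ∃ x₀, f.1 x₀ ≠ 0 := by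
    by_contra! hzero
    exact hf (Subtype.ext (funext hzero))
  refine ⟨Pi.mulSingle (x₀.right⁻¹ : G) w, x₀, ?_, fun x hx => ?_⟩
  · rw [Submodule.coe_sub, Pi.sub_apply, ind_chiTil_inl_apply, Pi.mulSingle_eq_same, ← sub_one_mul]
    exact mul_ne_zero (sub_ne_zero.2 hw') hx₀
  · rw [mul_inv_mem_Htil_iff] at hx
    rw [Submodule.coe_sub, Pi.sub_apply, ind_chiTil_inl_apply, Pi.mulSingle_eq_of_ne hx]
    simp

theorem isIrreducible_ind_chiTil [H.FiniteIndex] :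
    IsIrreducible (ind (Htil G H l) (chiTil G H l)) where
  exists_pair_ne := ⟨⊥, ⊤, fun h => bot_ne_top (congrArg Subrepresentation.toSubmodule h)⟩
  eq_bot_or_eq_top p := by
    refine or_iff_not_imp_left.2 fun hp => ?_
    obtain ⟨f, hfp, hf⟩ := p.toSubmodule.exists_mem_ne_zero_of_ne_bot fun h =>
      hp (Subrepresentation.toSubmodule_injective h)
    obtain ⟨a, x₀, hx₀, hsupp⟩ := exists_ind_chiTil_inl_sub_supported_on_coset hf
    exact eq_top_of_mem_supported_on_coset
      (p.toSubmodule.sub_mem (p.apply_mem_toSubmodule _ hfp) hfp) hx₀ hsupp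

theorem not_injective_ind_chiTil_to_ind_one
    (T : IntertwiningMap (ind (Htil G H l) (chiTil G H l)) (ind (Htil G H l) 1)) :
    ¬ Function.Injective T := fun hT => by
  obtain ⟨f, hf⟩ := exists_ne (0 : IndCarrier (Htil G H l) (chiTil G H l))
  obtain ⟨a, x₀, hx₀, -⟩ := exists_ind_chiTil_inl_sub_supported_on_coset hf
  have hfix : ind _ (chiTil G H l) (SemidirectProduct.inl a) f = f := hT <| by
    rw [T.isIntertwining, ind_one_apply_of_mem_normalCore (inl_mem_normalCore_Htil a)]
  exact hx₀ (by simp [hfix])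

end Wreath

theorem stmt_7_general (G : Type) [Group G] (H : Subgroup G) [H.FiniteIndex] (l : ℕ) (hl : 1 < l)
    (H' : Subgroup (Gtil G H l)) (χ' : H' →* ℂˣ) [Finite χ'.range]
    (h1 : RepEquiv (ind (Htil G H l) (1 : _ →* ℂˣ)) (ind H' (1 : _ →* ℂˣ)))
    (h2 : RepEquiv
      (ind (Subgroup.map (Htil G H l).subtype (chiTil G H l).ker) (1 : _ →* ℂˣ))
      (ind (Subgroup.map H'.subtype χ'.ker) (1 : _ →* ℂˣ))) :
    ∃ i, 0 < i ∧ i < Nat.card χ'.range ∧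
      RepEquiv (ind (Htil G H l) (chiTil G H l)) (ind H' (χ' ^ i)) := by
  have := nontrivial_rootsC hl
  have := isIrreducible_ind_chiTil (H := H) (l := l)
  obtain ⟨e₁⟩ := repEquiv_iff_nonempty_equiv.1 h1
  obtain ⟨e₂⟩ := repEquiv_iff_nonempty_equiv.1 h2
  let T := e₂.toIntertwiningMap.comp (indToIndKer (chiTil G H l))
  have hT : Function.Injective T := e₂.toLinearEquiv.injective.comp (indToIndKer_injective _)
  obtain ⟨i, hi, hS⟩ := exists_injective_to_ind_pow T (intertwiningMap_ne_zero_of_injective hT)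
  have hi₀ : i ≠ 0 := by
    rintro rfl
    rw [show χ' ^ 0 = 1 from pow_zero χ'] at hS
    obtain ⟨S, hS⟩ := hS
    exact not_injective_ind_chiTil_to_ind_one (e₁.symm.toIntertwiningMap.comp S)
      (e₁.symm.toLinearEquiv.injective.comp hS)
  obtain ⟨S, hS⟩ := hS
  exact ⟨i, Nat.pos_of_ne_zero hi₀, hi, repEquiv_of_injective_of_linearEquiv S hS <|
    indLinearEquiv _ 1 ≪≫ₗ e₁.toLinearEquiv ≪≫ₗ indLinearEquiv 1 _⟩

/-- If `Ind_{H̃}^{G̃}(1) ≅ Ind_{H̃'}^{G̃}(1)` and `Ind_{ker χ}^{G̃}(1) ≅ Ind_{ker χ'}^{G̃}(1)`,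
then `Ind_{H̃}^{G̃}(χ)` is isomorphic to `Ind_{H̃'}^{G̃}(χ')` or to `Ind_{H̃'}^{G̃}(χ̄')`. -/
theorem stmt_7 (G : Type) [Group G] [Finite G] (H : Subgroup G) (n : ℕ) (hn : H.index = n)
    (H' : Subgroup (Gtil G H 3)) (χ' : H' →* ℂˣ)
    (hcyc : IsCyclic χ'.range) (hcard : Nat.card χ'.range = 3)
    (h1 : RepEquiv (ind (Htil G H 3) (1 : _ →* ℂˣ)) (ind H' (1 : _ →* ℂˣ)))
    (h2 : RepEquiv
      (ind (Subgroup.map (Htil G H 3).subtype (chiTil G H 3).ker) (1 : _ →* ℂˣ))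
      (ind (Subgroup.map H'.subtype χ'.ker) (1 : _ →* ℂˣ))) :
    RepEquiv (ind (Htil G H 3) (chiTil G H 3)) (ind H' χ') ∨
      RepEquiv (ind (Htil G H 3) (chiTil G H 3)) (ind H' (conjChar χ')) := by
  have : Finite χ'.range := Nat.finite_of_card_ne_zero (by rw [hcard]; norm_num)
  obtain ⟨i, hi₀, hi, hequiv⟩ := stmt_7_general G H 3 (by norm_num) H' χ' h1 h2
  rw [conjChar_eq_pow, hcard]
  rw [hcard] at hi
  interval_cases i
  · exact .inl (pow_one χ' ▸ hequiv)
  · exact .inr hequiv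

end
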